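/- Let N be a positive integer and let i_1, i_2, …, i_m be integers. If for every integer n one has N·L_n = L_{n+i_1} + L_{n+i_2} + ⋯ + L_{n+i_m}, then N = φ^{i_1} + φ^{i_2} + ⋯ + φ^{i_m}. -/

import Mathlib

/-- The golden ratio φ = (1+√5)/2. -/
noncomputable def goldenPhi : ℝ := (1 + Real.sqrt 5) / 2

/-- The algebraic conjugate φ̄ = (1−√5)/2. -/
noncomputable def goldenPhiBar : ℝ := (1 - Real.sqrt 5) / 2

/-- Lucas numbers extended to all integer indices: L n = φ^n + φ̄^n. -/
noncomputable def LucasR (n : ℤ) : ℝ := goldenPhi ^ n + goldenPhiBar ^ n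

theorem goldenPhi_eq_goldenRatio : goldenPhi = Real.goldenRatio := rfl

theorem goldenPhiBar_eq_goldenConj : goldenPhiBar = Real.goldenConj := rfl

theorem goldenPhi_ne_zero : goldenPhi ≠ 0 :=
  goldenPhi_eq_goldenRatio ▸ Real.goldenRatio_ne_zero

theorem goldenPhiBar_ne_zero : goldenPhiBar ≠ 0 :=
  goldenPhiBar_eq_goldenConj ▸ Real.goldenConj_ne_zero

theorem goldenPhi_ne_goldenPhiBar : goldenPhi ≠ goldenPhiBar := by
  rw [goldenPhi_eq_goldenRatio, goldenPhiBar_eq_goldenConj]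
  exact (Real.goldenConj_neg.trans Real.goldenRatio_pos).ne'

theorem left_eq_zero_of_mul_zpow_add_mul_zpow_eq_zero {K : Type*} [Field K] {a b x y : K}
    (ha : a ≠ 0) (hb : b ≠ 0) (hab : a ≠ b) {n : ℤ}
    (hn : x * a ^ n + y * b ^ n = 0) (hn_succ : x * a ^ (n + 1) + y * b ^ (n + 1) = 0) :
    x = 0 := by
  rw [zpow_add_one₀ ha, zpow_add_one₀ hb] at hn_succ
  have eliminate_y : x * ((a - b) * a ^ n) = 0 := by
    linear_combination hn_succ - b * hn
  exact (mul_eq_zero.mp eliminate_y).resolve_right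
    (mul_ne_zero (sub_ne_zero.mpr hab) (zpow_ne_zero n ha))

section LucasSums

variable {ι : Type*} (s : Finset ι) (i : ι → ℤ)

theorem sum_lucasR_add (n : ℤ) :
    ∑ k ∈ s, LucasR (n + i k) =
      (∑ k ∈ s, goldenPhi ^ i k) * goldenPhi ^ n +
        (∑ k ∈ s, goldenPhiBar ^ i k) * goldenPhiBar ^ n := by
  simp only [LucasR, add_comm n, zpow_add₀ goldenPhi_ne_zero, zpow_add₀ goldenPhiBar_ne_zero,
    Finset.sum_add_distrib, Finset.sum_mul]

/-- Moving everything to one side gives `(c - ∑ φ^{i_k}) φ^n + (c - ∑ φ̄^{i_k}) φ̄^n = 0`; two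
consecutive instances of this force both coefficients to vanish, because `φ ≠ φ̄`. -/
theorem stmt_7_general {c : ℝ} {n : ℤ}
    (hn : c * LucasR n = ∑ k ∈ s, LucasR (n + i k))
    (hn_succ : c * LucasR (n + 1) = ∑ k ∈ s, LucasR (n + 1 + i k)) :
    c = ∑ k ∈ s, goldenPhi ^ i k := by
  have separate {j : ℤ} (hj : c * LucasR j = ∑ k ∈ s, LucasR (j + i k)) :
      (c - ∑ k ∈ s, goldenPhi ^ i k) * goldenPhi ^ j +
        (c - ∑ k ∈ s, goldenPhiBar ^ i k) * goldenPhiBar ^ j = 0 := by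
    rw [sum_lucasR_add, LucasR] at hj
    linear_combination hj
  exact sub_eq_zero.mp <| left_eq_zero_of_mul_zpow_add_mul_zpow_eq_zero goldenPhi_ne_zero
    goldenPhiBar_ne_zero goldenPhi_ne_goldenPhiBar (separate hn) (separate hn_succ)

end LucasSums

/-- If `N·L_n = L_{n+i_1} + ⋯ + L_{n+i_m}` for every integer `n`, then
`N = φ^{i_1} + ⋯ + φ^{i_m}`. -/
theorem stmt_7 (N : ℕ) (hN : 0 < N) (m : ℕ) (i : Fin m → ℤ)
    (h : ∀ n : ℤ, (N : ℝ) * LucasR n = ∑ k, LucasR (n + i k)) :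
    (N : ℝ) = ∑ k, goldenPhi ^ (i k) :=
  stmt_7_general Finset.univ i (h 0) (h (0 + 1))
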